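/- Let A be an n-dimensional cyclic left Leibniz algebra generated by a with characteristic polynomial p(x) = p₁(x)^{n₁}···p_s(x)^{n_s} of L_a, p₁(x) = x. Then A has a unique maximal ideal, namely M₁ = {b ∈ A : t(L_a)(b) = 0} where t(x) = p(x)/x^{n₁}·x^{n₁−1}... specifically t(x) = p(x)/p₁(x). -/

import Mathlib

open Polynomial LinearMap

/-- A (left) Leibniz algebra structure on the `K`-vector space `A`:
a bilinear multiplication satisfying `x(yz) = (xy)z + y(xz)`. -/
structure LeibnizMul (K A : Type*) [Field K] [AddCommGroup A] [Module K A] where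
  mul : A →ₗ[K] A →ₗ[K] A
  leibniz : ∀ x y z, mul x (mul y z) = mul (mul x y) z + mul y (mul x z)

namespace LeibnizMul

variable {K A : Type*} [Field K] [AddCommGroup A] [Module K A]

/-- The product of two subspaces: the span of all products `s·t`, `s ∈ S`, `t ∈ T`. -/
def mulSub (m : LeibnizMul K A) (S T : Submodule K A) : Submodule K A :=
  Submodule.span K (Set.image2 (fun x y => m.mul x y) (S : Set A) (T : Set A))

/-- Relative lower central series of the subalgebra `S`: `lcsIn m S n = S^(n+1)`,
i.e. `lcsIn m S 0 = S` and `lcsIn m S (n+1) = S · (lcsIn m S n)`. -/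
def lcsIn (m : LeibnizMul K A) (S : Submodule K A) : ℕ → Submodule K A
  | 0 => S
  | (n+1) => m.mulSub S (m.lcsIn S n)

/-- `A` is nilpotent: some term of the lower central series vanishes. -/
def IsNilpotent (m : LeibnizMul K A) : Prop := ∃ n, m.lcsIn ⊤ n = ⊥

/-- `S` is a subalgebra: a subspace closed under multiplication. -/
def IsSubalg (m : LeibnizMul K A) (S : Submodule K A) : Prop :=
  ∀ x ∈ S, ∀ y ∈ S, m.mul x y ∈ S

/-- `S` is a (two-sided) ideal. -/
def IsIdeal (m : LeibnizMul K A) (S : Submodule K A) : Prop :=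
  ∀ (x : A), ∀ y ∈ S, m.mul x y ∈ S ∧ m.mul y x ∈ S

/-- `M` is a maximal (proper) subalgebra. -/
def IsMaxSubalg (m : LeibnizMul K A) (M : Submodule K A) : Prop :=
  m.IsSubalg M ∧ M ≠ ⊤ ∧ ∀ S, m.IsSubalg S → M < S → S = ⊤

/-- The Frattini subalgebra: the intersection of all maximal subalgebras. -/
def frattini (m : LeibnizMul K A) : Submodule K A :=
  sInf {M | m.IsMaxSubalg M}

/-- The subalgebra generated by a single element `a`. -/
def subalgGen (m : LeibnizMul K A) (a : A) : Submodule K A :=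
  sInf {S | m.IsSubalg S ∧ a ∈ S}

/-- The normal closure of a subspace: the smallest ideal containing it. -/
def normalClosure (m : LeibnizMul K A) (S : Submodule K A) : Submodule K A :=
  sInf {I | m.IsIdeal I ∧ S ≤ I}

/-- The normalizer of a subspace `C`: all `x` with `x·c ∈ C` and `c·x ∈ C` for all `c ∈ C`. -/
def normalizer (m : LeibnizMul K A) (C : Submodule K A) : Submodule K A :=
  ⨅ c : C, (Submodule.comap (m.mul.flip (c : A)) C ⊓ Submodule.comap (m.mul (c : A)) C)

/-- The center of the subalgebra `S`: all `z ∈ S` with `z·x = x·z = 0` for all `x ∈ S`. -/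
def centerIn (m : LeibnizMul K A) (S : Submodule K A) : Submodule K A :=
  S ⊓ ⨅ x : S, (LinearMap.ker (m.mul.flip (x : A)) ⊓ LinearMap.ker (m.mul (x : A)))

/-- All `z ∈ S` with `z·x ∈ T` and `x·z ∈ T` for all `x ∈ S`. -/
def relCentralizer (m : LeibnizMul K A) (S T : Submodule K A) : Submodule K A :=
  S ⊓ ⨅ x : S, (Submodule.comap (m.mul.flip (x : A)) T ⊓ Submodule.comap (m.mul (x : A)) T)

/-- The upper central series of the subalgebra `S`:
`Z₀ = 0`, `Z_{j+1} = {z ∈ S : zS ⊆ Z_j and Sz ⊆ Z_j}`. -/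
def ucsIn (m : LeibnizMul K A) (S : Submodule K A) : ℕ → Submodule K A
  | 0 => ⊥
  | (j+1) => m.relCentralizer S (m.ucsIn S j)

/-- The right center `{r : A·r = 0}`. -/
def rightCenter (m : LeibnizMul K A) : Submodule K A := LinearMap.ker m.mul.flip

/-- Left-normed powers of `a`: `lpow m a k = a^(k+1)`. -/
def lpow (m : LeibnizMul K A) (a : A) : ℕ → A
  | 0 => a
  | (k+1) => m.mul a (m.lpow a k)

/-- The Fitting null component of left multiplication by `a`. -/
def fittingNull (m : LeibnizMul K A) (a : A) : Submodule K A :=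
  ⨆ k, LinearMap.ker ((m.mul a) ^ k)

end LeibnizMul

namespace LeibnizMul

variable {K A : Type*} [Field K] [AddCommGroup A] [Module K A]

theorem eq_top_of_isSubalg {m : LeibnizMul K A} {a : A} (hcyc : m.subalgGen a = ⊤)
    {S : Submodule K A} (hS : m.IsSubalg S) (ha : a ∈ S) : S = ⊤ :=
  top_le_iff.mp (hcyc ▸ sInf_le ⟨hS, ha⟩)

/-- Every element of a cyclic Leibniz algebra is, up to the left annihilator, a multiple of
the generator. -/
theorem exists_mul_eq_smul {m : LeibnizMul K A} {a : A} (hcyc : m.subalgGen a = ⊤) (x : A) :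
    ∃ c : K, m.mul x = c • m.mul a := by
  have key : ∀ x ∈ Submodule.comap m.mul (K ∙ m.mul a),
      m.mul (m.mul a x) = 0 := by
    intro x hx
    obtain ⟨c, hc⟩ := Submodule.mem_span_singleton.mp hx
    ext z
    have := m.leibniz a x z
    simpa [← hc] using this
  have htop : Submodule.comap m.mul (K ∙ m.mul a) = ⊤ := by
    refine eq_top_of_isSubalg hcyc (fun x hx y hy => ?_) (Submodule.mem_span_singleton_self _)
    obtain ⟨c, hc⟩ := Submodule.mem_span_singleton.mp hx
    simp [← hc, key y hy]
  have hx : x ∈ Submodule.comap m.mul (K ∙ m.mul a) := htop ▸ Submodule.mem_top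
  obtain ⟨c, hc⟩ := Submodule.mem_span_singleton.mp hx
  exact ⟨c, hc.symm⟩

theorem mul_eq_zero_of_mem_range {m : LeibnizMul K A} {a : A} (hcyc : m.subalgGen a = ⊤)
    {x : A} (hx : x ∈ range (m.mul a)) : m.mul x = 0 := by
  obtain ⟨y, rfl⟩ := hx
  obtain ⟨c, hc⟩ := exists_mul_eq_smul hcyc y
  ext z
  have := m.leibniz a y z
  simpa [hc] using this

/-- In a cyclic Leibniz algebra, a subspace that contains the generator and is invariant under
left multiplication by it is everything. -/
theorem eq_top_of_invariant {m : LeibnizMul K A} {a : A} (hcyc : m.subalgGen a = ⊤)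
    {S : Submodule K A} (hS : ∀ x ∈ S, m.mul a x ∈ S) (ha : a ∈ S) : S = ⊤ := by
  refine eq_top_of_isSubalg hcyc (fun x _ y hy => ?_) ha
  obtain ⟨c, hc⟩ := exists_mul_eq_smul hcyc x
  rw [hc]
  exact S.smul_mem c (hS y hy)

theorem eq_top_of_range_le {m : LeibnizMul K A} {a : A} (hcyc : m.subalgGen a = ⊤)
    {S : Submodule K A} (hS : range (m.mul a) ≤ S) (ha : a ∈ S) : S = ⊤ :=
  eq_top_of_invariant hcyc (fun x _ => hS ⟨x, rfl⟩) ha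

theorem exists_eq_smul_add {m : LeibnizMul K A} {a : A} (hcyc : m.subalgGen a = ⊤) (x : A) :
    ∃ c : K, ∃ r ∈ range (m.mul a), x = c • a + r := by
  have htop : (K ∙ a) ⊔ range (m.mul a) = ⊤ :=
    eq_top_of_range_le hcyc le_sup_right
      (Submodule.mem_sup_left (Submodule.mem_span_singleton_self a))
  have hx : x ∈ (K ∙ a) ⊔ range (m.mul a) := htop ▸ Submodule.mem_top
  obtain ⟨y, hy, r, hr, rfl⟩ := Submodule.mem_sup.mp hx
  obtain ⟨c, rfl⟩ := Submodule.mem_span_singleton.mp hy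
  exact ⟨c, r, hr, rfl⟩

theorem eq_top_of_range_le_of_notMem {m : LeibnizMul K A} {a : A} (hcyc : m.subalgGen a = ⊤)
    {S : Submodule K A} (hS : range (m.mul a) ≤ S) {x : A} (hx : x ∈ S)
    (hxr : x ∉ range (m.mul a)) : S = ⊤ := by
  obtain ⟨c, r, hr, rfl⟩ := exists_eq_smul_add hcyc x
  have hc : c ≠ 0 := by
    rintro rfl
    simp_all
  have hca : c • a ∈ S := (S.add_mem_iff_left (hS hr)).mp hx
  exact eq_top_of_range_le hcyc hS ((S.smul_mem_iff hc).mp hca)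

theorem isIdeal_range {m : LeibnizMul K A} {a : A} (hcyc : m.subalgGen a = ⊤) :
    m.IsIdeal (range (m.mul a)) := by
  intro x y hy
  obtain ⟨c, hc⟩ := exists_mul_eq_smul hcyc x
  rw [mul_eq_zero_of_mem_range hcyc hy, hc]
  exact ⟨Submodule.smul_mem _ c ⟨y, rfl⟩, Submodule.zero_mem _⟩

theorem IsIdeal.le_range {m : LeibnizMul K A} {a : A} (hcyc : m.subalgGen a = ⊤)
    {I : Submodule K A} (hI : m.IsIdeal I) (hne : I ≠ ⊤) : I ≤ range (m.mul a) := by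
  intro y hy
  by_contra hyr
  refine hne (eq_top_of_range_le_of_notMem hcyc ?_ hy hyr)
  obtain ⟨c, r, hr, rfl⟩ := exists_eq_smul_add hcyc y
  have hc : c ≠ 0 := by
    rintro rfl
    simp_all
  rintro _ ⟨z, rfl⟩
  have := (hI z _ hy).2
  rw [map_add, mul_eq_zero_of_mem_range hcyc hr, add_zero, map_smul, LinearMap.smul_apply] at this
  exact (I.smul_mem_iff hc).mp this

/-- A monic polynomial annihilating left multiplication by the generator of a cyclic Leibniz
algebra has degree at least the dimension. -/
theorem finrank_le_natDegree_of_aeval_eq_zero {m : LeibnizMul K A} {a : A}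
    (hcyc : m.subalgGen a = ⊤) {t : K[X]} (ht : t.Monic) (h0 : aeval (m.mul a) t = 0) :
    Module.finrank K A ≤ t.natDegree := by
  let φ : K[X] →ₗ[K] A := (LinearMap.applyₗ a).comp (aeval (m.mul a)).toLinearMap
  have hφ (q : K[X]) : φ q = aeval (m.mul a) q a := rfl
  have hrange : range φ = ⊤ := by
    refine eq_top_of_invariant hcyc ?_ ⟨1, by simp [hφ]⟩
    rintro _ ⟨q, rfl⟩
    exact ⟨X * q, by simp [hφ]⟩
  let ψ : degreeLT K t.natDegree →ₗ[K] A := φ.comp (Submodule.subtype _)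
  have hψ : Function.Surjective ψ := by
    intro x
    obtain ⟨q, rfl⟩ := range_eq_top.mp hrange x
    refine ⟨⟨q %ₘ t, ?_⟩, ?_⟩
    · rw [mem_degreeLT, ← degree_eq_natDegree ht.ne_zero]
      exact degree_modByMonic_lt q ht
    · have hq := congrArg φ (modByMonic_add_div q t)
      simpa [hφ, h0, ψ] using hq
  have e := degreeLTEquiv K t.natDegree
  have hsurj : Function.Surjective (ψ.comp e.symm.toLinearMap) := hψ.comp e.symm.surjective
  simpa using LinearMap.finrank_le_finrank_of_surjective hsurj

theorem ker_aeval_eq_range [FiniteDimensional K A] {m : LeibnizMul K A} {a : A}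
    (hcyc : m.subalgGen a = ⊤) {t : K[X]} (ht : t * X = (m.mul a).charpoly) :
    ker (aeval (m.mul a) t) = range (m.mul a) := by
  have hmonic : t.Monic := monic_X.of_mul_monic_right (ht ▸ (m.mul a).charpoly_monic)
  have hle : range (m.mul a) ≤ ker (aeval (m.mul a) t) := by
    rintro _ ⟨x, rfl⟩
    have h := LinearMap.congr_fun (m.mul a).aeval_self_charpoly x
    simpa [← ht] using h
  refine le_antisymm (fun x hx => ?_) hle
  by_contra hxr
  have h0 := ker_eq_top.mp (eq_top_of_range_le_of_notMem hcyc hle hx hxr)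
  have h1 := finrank_le_natDegree_of_aeval_eq_zero hcyc hmonic h0
  have h2 := congrArg natDegree ht
  rw [natDegree_mul_X hmonic.ne_zero, charpoly_natDegree] at h2
  omega

theorem range_ne_top_of_X_dvd_charpoly [FiniteDimensional K A] {f : A →ₗ[K] A}
    (h : X ∣ f.charpoly) : range f ≠ ⊤ := by
  intro htop
  have hroot : f.charpoly.IsRoot 0 := dvd_iff_isRoot.mp (by simpa using h)
  obtain ⟨v, hv, hv0⟩ :=
    ((Module.End.hasEigenvalue_iff_isRoot_charpoly f 0).mpr hroot).exists_hasEigenvector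
  have hker : f v = 0 := by simpa using Module.End.mem_eigenspace_iff.mp hv
  refine hv0 ((ker_eq_bot'.mp (ker_eq_bot_iff_range_eq_top.mpr htop)) v hker)

end LeibnizMul

/-- a cyclic Leibniz algebra has a unique maximal ideal, namely the
kernel of `t(L_a)` where `t = p/p₁` and `p₁ = X`. -/
theorem stmt15 {K A : Type*} [Field K] [AddCommGroup A] [Module K A] [FiniteDimensional K A]
    (m : LeibnizMul K A) (a : A) (hcyc : m.subalgGen a = ⊤)
    (s : ℕ) (hs : 0 < s) (p : Fin s → Polynomial K) (e : Fin s → ℕ)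
    (hirr : ∀ j, Irreducible (p j)) (hmonic : ∀ j, (p j).Monic)
    (hdist : Function.Injective p) (hpos : ∀ j, 1 ≤ e j)
    (hp1 : p ⟨0, hs⟩ = Polynomial.X)
    (hfact : LinearMap.charpoly (m.mul a) = ∏ j, p j ^ e j) :
    ∀ I : Submodule K A,
      (m.IsIdeal I ∧ I ≠ ⊤ ∧ ∀ J : Submodule K A, m.IsIdeal J → I < J → J = ⊤) ↔
        I = LinearMap.ker
          (Polynomial.aeval (m.mul a)
            (∏ k, p k ^ (e k - if k = ⟨0, hs⟩ then 1 else 0))) := by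
  have ht : (∏ k, p k ^ (e k - if k = ⟨0, hs⟩ then 1 else 0)) * X = (m.mul a).charpoly := by
    have hX : (X : K[X]) = ∏ k, p k ^ (if k = ⟨0, hs⟩ then 1 else 0) := by
      simp [hp1]
    rw [hfact, hX, ← Finset.prod_mul_distrib]
    refine Finset.prod_congr rfl fun k _ => ?_
    rw [← pow_add, Nat.sub_add_cancel]
    split_ifs
    · exact hpos k
    · exact Nat.zero_le _
  rw [LeibnizMul.ker_aeval_eq_range hcyc ht]
  have hne : range (m.mul a) ≠ ⊤ :=
    LeibnizMul.range_ne_top_of_X_dvd_charpoly (ht ▸ dvd_mul_left X _)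
  intro I
  constructor
  · rintro ⟨hI, hI', hmax⟩
    by_contra hIr
    exact hne (hmax _ (LeibnizMul.isIdeal_range hcyc) ((hI.le_range hcyc hI').lt_of_ne hIr))
  · rintro rfl
    refine ⟨LeibnizMul.isIdeal_range hcyc, hne, fun J hJ hlt => ?_⟩
    by_contra hJ'
    exact hlt.not_ge (hJ.le_range hcyc hJ')
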